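/- For Re(s) > 1, the Witten zeta function of so(5) has the integral representation ζ_{so(5)}(s) = (6^s / (2πi Γ(s))) ∫_{c−i∞}^{c+i∞} Γ(s+z) Γ(−z) ζ_{MT,2}(s, s−z, 2s+z) dz for any c with −Re(s) < c < 0. -/

import Mathlib

open Filter Topology Complex

/-- The Mordell–Tornheim double zeta function, defined by its double series
(indexed so that `m = p.1 + 1 ≥ 1`, `n = p.2 + 1 ≥ 1`). -/
noncomputable def zetaMT (s₁ s₂ s₃ : ℂ) : ℂ :=
  ∑' p : ℕ × ℕ, ((p.1 + 1 : ℕ) : ℂ) ^ (-s₁) * ((p.2 + 1 : ℕ) : ℂ) ^ (-s₂) *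
    ((p.1 + p.2 + 2 : ℕ) : ℂ) ^ (-s₃)

/-- The Witten zeta function of `so(5)`, for `Re s > 1/2`, as a double series. -/
noncomputable def zetaSO5 (s : ℂ) : ℂ :=
  (6 : ℂ) ^ s * ∑' p : ℕ × ℕ,
    ((((p.1 + 1) * (p.2 + 1) * ((p.1 + 1) + (p.2 + 1)) *
      ((p.1 + 1) + 2 * (p.2 + 1)) : ℕ) : ℂ)) ^ (-s)

/-!
The Mellin transform of `x ↦ (1 + x)⁻ˢ` is the beta integral `Γ(w) Γ(s - w) / Γ(s)`. As `Γ` decays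
at least quadratically on vertical lines of the right half-plane, Mellin inversion applies and gives
the Mellin–Barnes formula `2π Γ(s) (1 + x)⁻ˢ = ∫ Γ(s + z) Γ(-z) xᶻ dt`, where `z = c + it`. For
`x = n / (m + n)` it expands `(m + 2n)⁻ˢ = (m + n)⁻ˢ (1 + x)⁻ˢ`. With `σ = Re s`, the inequality
`(m + n)^(2σ + c) ≥ m^σ n^(σ + c)` bounds the terms of the resulting double series on the line
`Re z = c` by `(m n)^(-2σ)`, so sum and integral may be exchanged as soon as `σ > 1/2`.
-/

section ChangeOfVariables

open MeasureTheory Set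

lemma image_div_one_sub_Ioo : (fun t : ℝ => t / (1 - t)) '' Ioo 0 1 = Ioi 0 := by
  ext x
  simp only [mem_image, mem_Ioo, mem_Ioi]
  constructor
  · rintro ⟨t, ⟨h0, h1⟩, rfl⟩
    exact div_pos h0 (sub_pos.2 h1)
  · intro hx
    refine ⟨x / (1 + x), ⟨by positivity, (div_lt_one (by positivity)).2 (by linarith)⟩, ?_⟩
    have : 1 + x ≠ 0 := by positivity
    field_simp
    simp

lemma injOn_div_one_sub {𝕜 : Type*} [Field 𝕜] : InjOn (fun t : 𝕜 => t / (1 - t)) {1}ᶜ := by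
  intro a ha b hb h
  rw [div_eq_div_iff (sub_ne_zero.2 (Ne.symm ha)) (sub_ne_zero.2 (Ne.symm hb))] at h
  linear_combination h

lemma hasDerivAt_div_one_sub {𝕜 : Type*} [NontriviallyNormedField 𝕜] {t : 𝕜} (ht : t ≠ 1) :
    HasDerivAt (fun t : 𝕜 => t / (1 - t)) ((1 - t) ^ 2)⁻¹ t := by
  convert! (hasDerivAt_id t).div ((hasDerivAt_id t).const_sub 1) (sub_ne_zero.2 ht.symm) using 1
  simp

variable {E : Type*} [NormedAddCommGroup E] [NormedSpace ℝ E]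

lemma integrableOn_Ioi_iff_integrableOn_Ioo_div_one_sub (f : ℝ → E) :
    IntegrableOn f (Ioi 0) ↔
      IntegrableOn (fun t => ((1 - t) ^ 2)⁻¹ • f (t / (1 - t))) (Ioo 0 1) := by
  rw [← image_div_one_sub_Ioo, integrableOn_image_iff_integrableOn_abs_deriv_smul measurableSet_Ioo
    (fun t ht => (hasDerivAt_div_one_sub ht.2.ne).hasDerivWithinAt)
    (injOn_div_one_sub.mono fun t ht => ht.2.ne)]
  simp only [abs_inv, abs_sq]

lemma integral_Ioi_eq_integral_Ioo_div_one_sub (f : ℝ → E) :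
    ∫ x in Ioi 0, f x = ∫ t in Ioo (0 : ℝ) 1, ((1 - t) ^ 2)⁻¹ • f (t / (1 - t)) := by
  rw [← image_div_one_sub_Ioo, integral_image_eq_integral_abs_deriv_smul measurableSet_Ioo
    (fun t ht => (hasDerivAt_div_one_sub ht.2.ne).hasDerivWithinAt)
    (injOn_div_one_sub.mono fun t ht => ht.2.ne)]
  simp only [abs_inv, abs_sq]

lemma inv_sq_smul_cpow_smul_one_add_cpow_neg (s w : ℂ) {t : ℝ} (ht : t ∈ Ioo 0 1) :
    ((1 - t) ^ 2)⁻¹ • ((t / (1 - t) : ℝ) : ℂ) ^ (w - 1) •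
        (1 + ((t / (1 - t) : ℝ) : ℂ)) ^ (-s) =
      (t : ℂ) ^ (w - 1) * (1 - (t : ℂ)) ^ (s - w - 1) := by
  obtain ⟨u, rfl⟩ : ∃ u, t = 1 - u := ⟨1 - t, by ring⟩
  have hu : 0 < u := by linarith [ht.2]
  have hu0 : (u : ℂ) ≠ 0 := ofReal_ne_zero.2 hu.ne'
  have one_add_div : 1 + (((1 - u) / u : ℝ) : ℂ) = (u : ℂ)⁻¹ := by
    push_cast
    field_simp
    ring
  have inv_cpow_neg : (u : ℂ)⁻¹ ^ (-s) = (u : ℂ) ^ s := by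
    rw [inv_cpow _ _ (by simp [arg_ofReal_of_nonneg hu.le, Real.pi_ne_zero.symm]), cpow_neg,
      inv_inv]
  have cpow_sub_sub : (u : ℂ) ^ (s - w - 1) = (u : ℂ) ^ s / (u : ℂ) ^ (w - 1) / (u : ℂ) ^ 2 := by
    rw [← cpow_two, ← cpow_sub _ _ hu0, ← cpow_sub _ _ hu0]
    ring_nf
  rw [sub_sub_cancel, one_add_div, inv_cpow_neg, ofReal_div, div_cpow_ofReal_nonneg ht.1.le hu.le,
    real_smul, smul_eq_mul]
  push_cast
  rw [sub_sub_cancel, cpow_sub_sub]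
  ring

lemma hasMellin_one_add_cpow_neg {s w : ℂ} (hw : 0 < w.re) (hws : w.re < s.re) :
    HasMellin (fun x : ℝ => (1 + (x : ℂ)) ^ (-s)) w (Gamma w * Gamma (s - w) / Gamma s) := by
  have hsw : 0 < (s - w).re := by simpa using hws
  constructor
  · rw [MellinConvergent, integrableOn_Ioi_iff_integrableOn_Ioo_div_one_sub,
      integrableOn_congr_fun (fun _ => inv_sq_smul_cpow_smul_one_add_cpow_neg s w)
        measurableSet_Ioo,
      ← intervalIntegrable_iff_integrableOn_Ioo_of_le zero_le_one]
    exact betaIntegral_convergent hw hsw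
  · rw [mellin, integral_Ioi_eq_integral_Ioo_div_one_sub,
      setIntegral_congr_fun measurableSet_Ioo
        (fun _ => inv_sq_smul_cpow_smul_one_add_cpow_neg s w),
      ← integral_Ioc_eq_integral_Ioo,
      ← intervalIntegral.integral_of_le zero_le_one]
    simpa only [betaIntegral, add_sub_cancel] using betaIntegral_eq_Gamma_mul_div w (s - w) hw hsw

end ChangeOfVariables

section GammaOnVerticalLines

open MeasureTheory

lemma norm_Gamma_le_Gamma_re {w : ℂ} (hw : 0 < w.re) : ‖Gamma w‖ ≤ Real.Gamma w.re := by
  rw [Gamma_eq_integral hw, GammaIntegral, Real.Gamma_eq_integral hw]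
  refine (norm_integral_le_integral_norm _).trans_eq
    (setIntegral_congr_fun measurableSet_Ioi fun x hx => ?_)
  simp [norm_cpow_eq_rpow_re_of_pos hx, norm_exp]

lemma norm_Gamma_le_Gamma_re_add_two_div_sq {w : ℂ} (hw : 0 < w.re) :
    ‖Gamma w‖ ≤ Real.Gamma (w.re + 2) / ‖w‖ ^ 2 := by
  have w_ne_zero : w ≠ 0 := by
    rintro rfl
    simp at hw
  have w_add_one_ne_zero : w + 1 ≠ 0 := fun h => by
    have := congrArg re h
    simp only [add_re, one_re, zero_re] at this
    linarith
  have Gamma_add_two : Gamma (w + 2) = (w + 1) * (w * Gamma w) := by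
    rw [← Gamma_add_one w w_ne_zero, ← Gamma_add_one (w + 1) w_add_one_ne_zero, add_assoc,
      one_add_one_eq_two]
  have norm_le_norm_add_one : ‖w‖ ≤ ‖w + 1‖ := by
    refine le_of_sq_le_sq ?_ (norm_nonneg _)
    simp only [Complex.sq_norm, normSq_apply, add_re, add_im, one_re, one_im]
    nlinarith
  rw [le_div_iff₀ (by positivity)]
  calc ‖Gamma w‖ * ‖w‖ ^ 2 = ‖w‖ * (‖w‖ * ‖Gamma w‖) := by ring
    _ ≤ ‖w + 1‖ * (‖w‖ * ‖Gamma w‖) := by gcongr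
    _ = ‖Gamma (w + 2)‖ := by rw [Gamma_add_two, norm_mul, norm_mul]
    _ ≤ Real.Gamma (w.re + 2) := by
      simpa using norm_Gamma_le_Gamma_re (w := w + 2) (by simpa using by linarith)

lemma continuousOn_Gamma_re_pos : ContinuousOn Gamma {w | 0 < w.re} := by
  refine fun w hw => (differentiableAt_Gamma w fun m hm => ?_).continuousAt.continuousWithinAt
  have : (0 : ℝ) < -m := by simpa [hm] using hw
  linarith [m.cast_nonneg (α := ℝ)]

lemma integrable_inv_sq_add_sq {a : ℝ} (ha : a ≠ 0) :
    Integrable fun t : ℝ => (a ^ 2 + t ^ 2)⁻¹ := by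
  convert! (integrable_inv_one_add_sq.comp_div ha).const_mul (a ^ 2)⁻¹ using 2 with t
  field_simp

lemma verticalIntegrable_Gamma {σ : ℝ} (hσ : 0 < σ) : VerticalIntegrable Gamma σ := by
  refine ((integrable_inv_sq_add_sq hσ.ne').const_mul (Real.Gamma (σ + 2))).mono'
    (continuousOn_Gamma_re_pos.comp_continuous (by fun_prop)
      (by simpa using hσ)).aestronglyMeasurable (.of_forall fun t => ?_)
  have norm_sq : ‖(σ : ℂ) + t * I‖ ^ 2 = σ ^ 2 + t ^ 2 := by
    rw [Complex.sq_norm, normSq_add_mul_I]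
  simpa [norm_sq, div_eq_mul_inv] using
    norm_Gamma_le_Gamma_re_add_two_div_sq (w := σ + t * I) (by simpa using hσ)

lemma verticalIntegrable_Gamma_add_mul_Gamma_neg {s : ℂ} {c : ℝ} (hc0 : -s.re < c) (hc1 : c < 0) :
    VerticalIntegrable (fun z => Gamma (s + z) * Gamma (-z)) c := by
  have re_pos (t : ℝ) : 0 < (s + (c + t * I)).re := by
    simpa using by linarith
  have Gamma_neg_integrable : Integrable fun t : ℝ => Gamma (-(c + t * I)) := by
    convert! (verticalIntegrable_Gamma (neg_pos.2 hc1)).comp_neg using 3 with t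
    push_cast
    ring
  refine Gamma_neg_integrable.bdd_mul (c := Real.Gamma (s.re + c))
    (continuousOn_Gamma_re_pos.comp_continuous (by fun_prop) re_pos).aestronglyMeasurable
    (.of_forall fun t => ?_)
  simpa using norm_Gamma_le_Gamma_re (re_pos t)

end GammaOnVerticalLines

section MellinBarnes

open MeasureTheory

variable {s : ℂ} {c : ℝ}

theorem integral_Gamma_add_mul_Gamma_neg_mul_cpow (hc0 : -s.re < c) (hc1 : c < 0) {x : ℝ}
    (hx : 0 < x) :
    ∫ t : ℝ, Gamma (s + (c + t * I)) * Gamma (-(c + t * I)) * (x : ℂ) ^ (c + t * I) =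
      2 * Real.pi * Gamma s * (1 + (x : ℂ)) ^ (-s) := by
  have Gamma_ne_zero : Gamma s ≠ 0 := Gamma_ne_zero_of_re_pos (by linarith)
  have hasMellin (w : ℂ) (hw : w.re = -c) :=
    hasMellin_one_add_cpow_neg (s := s) (w := w) (by linarith) (by linarith)
  have mellin_line (t : ℝ) : mellin (fun x : ℝ => (1 + (x : ℂ)) ^ (-s)) ((-c : ℝ) + t * I) =
      Gamma (s + (c + (-t : ℝ) * I)) * Gamma (-(c + (-t : ℝ) * I)) / Gamma s := by
    rw [(hasMellin _ (by simp)).2, mul_comm (Gamma (s + _))]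
    push_cast
    ring_nf
  have mellin_verticalIntegrable :
      VerticalIntegrable (mellin fun x : ℝ => (1 + (x : ℂ)) ^ (-s)) (-c) := by
    simp only [VerticalIntegrable, mellin_line]
    exact (verticalIntegrable_Gamma_add_mul_Gamma_neg hc0 hc1).comp_neg.div_const _
  have inversion := mellinInv_mellin_eq (-c) (fun x : ℝ => (1 + (x : ℂ)) ^ (-s)) hx
    (hasMellin _ (by simp)).1 mellin_verticalIntegrable
    (ContinuousAt.cpow (by fun_prop) continuousAt_const (.inl (by simpa using by linarith)))
  rw [← inversion, mellinInv, ← integral_neg_eq_self, real_smul, ← integral_const_mul,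
    ← integral_const_mul]
  refine integral_congr_ae (.of_forall fun t => ?_)
  simp only [mellin_line, smul_eq_mul]
  push_cast
  field_simp
  ring_nf

theorem integral_Gamma_add_mul_Gamma_neg_mul_tsum {ι : Type*} [Countable ι] {a : ι → ℂ} {x : ι → ℝ}
    (hc0 : -s.re < c) (hc1 : c < 0) (hx : ∀ i, 0 < x i)
    (ha : Summable fun i => ‖a i‖ * x i ^ c) :
    ∫ t : ℝ, Gamma (s + (c + t * I)) * Gamma (-(c + t * I)) *
        ∑' i, a i * (x i : ℂ) ^ (c + t * I) =
      2 * Real.pi * Gamma s * ∑' i, a i * (1 + (x i : ℂ)) ^ (-s) := by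
  set K : ℝ → ℂ := fun t => Gamma (s + (c + t * I)) * Gamma (-(c + t * I)) with hK
  have K_integrable : Integrable K := verticalIntegrable_Gamma_add_mul_Gamma_neg hc0 hc1
  have norm_term (i : ι) (t : ℝ) : ‖a i * (x i : ℂ) ^ (c + t * I)‖ = ‖a i‖ * x i ^ c := by
    simp [norm_cpow_eq_rpow_re_of_pos (hx i)]
  have term_continuous (i : ι) : Continuous fun t : ℝ => a i * (x i : ℂ) ^ (c + t * I) :=
    continuous_const.mul
      (Continuous.const_cpow (by fun_prop) (.inl (ofReal_ne_zero.2 (hx i).ne')))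
  have integrable_term (i : ι) : Integrable fun t => K t * (a i * (x i : ℂ) ^ (c + t * I)) :=
    K_integrable.mul_bdd (term_continuous i).aestronglyMeasurable
      (.of_forall fun t => (norm_term i t).le)
  have summable_integral_norm :
      Summable fun i => ∫ t, ‖K t * (a i * (x i : ℂ) ^ (c + t * I))‖ := by
    simp only [norm_mul (K _), norm_term, integral_mul_const]
    exact ha.mul_left _
  simp only [← tsum_mul_left]
  rw [← integral_tsum_of_summable_integral_norm integrable_term summable_integral_norm]
  refine tsum_congr fun i => ?_
  rw [mul_left_comm, ← integral_Gamma_add_mul_Gamma_neg_mul_cpow hc0 hc1 (hx i),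
    ← integral_const_mul]
  simp only [hK, mul_left_comm]

end MellinBarnes

section MordellTornheim

/-- The term `m ^ (-s₁) * n ^ (-s₂) * (m + n) ^ (-s₃)` of the Mordell–Tornheim series `zetaMT`, with
`m = p.1 + 1` and `n = p.2 + 1`. -/
noncomputable def mordellTornheimTerm (s₁ s₂ s₃ : ℂ) (p : ℕ × ℕ) : ℂ :=
  ((p.1 + 1 : ℕ) : ℂ) ^ (-s₁) * ((p.2 + 1 : ℕ) : ℂ) ^ (-s₂) * ((p.1 + p.2 + 2 : ℕ) : ℂ) ^ (-s₃)

/-- The ratio `n / (m + n)`, with `m = p.1 + 1` and `n = p.2 + 1`. It is the variable of the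
Mellin–Barnes expansion, as `m + 2 * n = (m + n) * (1 + n / (m + n))`. -/
noncomputable def sndRatio (p : ℕ × ℕ) : ℝ :=
  ((p.2 + 1 : ℕ) : ℝ) / ((p.1 + p.2 + 2 : ℕ) : ℝ)

lemma sndRatio_pos (p : ℕ × ℕ) : 0 < sndRatio p := by
  unfold sndRatio
  positivity

lemma mordellTornheimTerm_mul_sndRatio_cpow (s₁ s₂ s₃ z : ℂ) (p : ℕ × ℕ) :
    mordellTornheimTerm s₁ s₂ s₃ p * (sndRatio p : ℂ) ^ z =
      mordellTornheimTerm s₁ (s₂ - z) (s₃ + z) p := by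
  have hn : ((p.2 + 1 : ℕ) : ℂ) ≠ 0 := Nat.cast_ne_zero.2 (by omega)
  have hmn : ((p.1 + p.2 + 2 : ℕ) : ℂ) ≠ 0 := Nat.cast_ne_zero.2 (by omega)
  rw [mordellTornheimTerm, mordellTornheimTerm, sndRatio, ofReal_div, neg_add, neg_sub,
    sub_eq_neg_add, cpow_add _ _ hn, cpow_add _ _ hmn, cpow_neg _ z,
    div_cpow_ofReal_nonneg (Nat.cast_nonneg _) (Nat.cast_nonneg _)]
  simp only [ofReal_natCast]
  ring

lemma mordellTornheimTerm_mul_cpow_neg (s₁ s₂ s₃ s₄ : ℂ) (p : ℕ × ℕ) :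
    mordellTornheimTerm s₁ s₂ s₃ p * ((p.1 + 1 + 2 * (p.2 + 1) : ℕ) : ℂ) ^ (-s₄) =
      mordellTornheimTerm s₁ s₂ (s₃ + s₄) p * (1 + (sndRatio p : ℂ)) ^ (-s₄) := by
  have hmn : ((p.1 + p.2 + 2 : ℕ) : ℂ) ≠ 0 := Nat.cast_ne_zero.2 (by omega)
  have factor : ((p.1 + 1 + 2 * (p.2 + 1) : ℕ) : ℝ) =
      ((p.1 + p.2 + 2 : ℕ) : ℝ) * (1 + sndRatio p) := by
    rw [sndRatio, mul_one_add, mul_div_cancel₀ _ (by positivity)]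
    push_cast
    ring
  rw [mordellTornheimTerm, mordellTornheimTerm, ← ofReal_natCast (p.1 + 1 + 2 * (p.2 + 1)), factor,
    ofReal_mul, mul_cpow_ofReal_nonneg (Nat.cast_nonneg _)
      (add_nonneg zero_le_one (sndRatio_pos p).le), neg_add, cpow_add _ _ hmn]
  push_cast
  ring

lemma norm_mordellTornheimTerm (s₁ s₂ s₃ : ℂ) (p : ℕ × ℕ) :
    ‖mordellTornheimTerm s₁ s₂ s₃ p‖ = ((p.1 + 1 : ℕ) : ℝ) ^ (-s₁.re) *
      ((p.2 + 1 : ℕ) : ℝ) ^ (-s₂.re) * ((p.1 + p.2 + 2 : ℕ) : ℝ) ^ (-s₃.re) := by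
  simp only [mordellTornheimTerm, norm_mul, ← neg_re]
  rw [norm_natCast_cpow_of_pos (by omega), norm_natCast_cpow_of_pos (by omega),
    norm_natCast_cpow_of_pos (by omega)]

lemma summable_norm_mordellTornheimTerm {s₁ s₂ s₃ : ℂ} {α β : ℝ} (hα : 0 ≤ α) (hβ : 0 ≤ β)
    (h₁ : 1 < s₁.re + α) (h₂ : 1 < s₂.re + β) (h₃ : s₃.re = α + β) :
    Summable fun p => ‖mordellTornheimTerm s₁ s₂ s₃ p‖ := by
  have summable_rpow {σ : ℝ} (hσ : 1 < σ) : Summable fun n : ℕ => ((n + 1 : ℕ) : ℝ) ^ (-σ) :=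
    (summable_nat_add_iff 1).2 (Real.summable_nat_rpow.2 (by linarith))
  refine ((summable_rpow h₁).mul_of_nonneg (summable_rpow h₂) (fun _ => by positivity)
    (fun _ => by positivity)).of_nonneg_of_le (fun _ => norm_nonneg _) fun p => ?_
  have hm : (0 : ℝ) < (p.1 + 1 : ℕ) := by positivity
  have hn : (0 : ℝ) < (p.2 + 1 : ℕ) := by positivity
  have hmn : (0 : ℝ) < (p.1 + p.2 + 2 : ℕ) := by positivity
  have rpow_fst_le : ((p.1 + p.2 + 2 : ℕ) : ℝ) ^ (-α) ≤ ((p.1 + 1 : ℕ) : ℝ) ^ (-α) :=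
    Real.rpow_le_rpow_of_nonpos hm (Nat.cast_le.2 (by omega)) (neg_nonpos.2 hα)
  have rpow_snd_le : ((p.1 + p.2 + 2 : ℕ) : ℝ) ^ (-β) ≤ ((p.2 + 1 : ℕ) : ℝ) ^ (-β) :=
    Real.rpow_le_rpow_of_nonpos hn (Nat.cast_le.2 (by omega)) (neg_nonpos.2 hβ)
  rw [norm_mordellTornheimTerm, h₃, neg_add, neg_add, neg_add, Real.rpow_add hm, Real.rpow_add hn,
    Real.rpow_add hmn, mul_mul_mul_comm]
  gcongr

theorem integral_Gamma_add_mul_Gamma_neg_mul_zetaMT {s₁ s₂ s₃ s₄ : ℂ} {c : ℝ} (hc0 : -s₄.re < c)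
    (hc1 : c < 0)
    (h : Summable fun p => ‖mordellTornheimTerm s₁ (s₂ - c) (s₃ + s₄ + c) p‖) :
    ∫ t : ℝ, Gamma (s₄ + (c + t * I)) * Gamma (-(c + t * I)) *
        zetaMT s₁ (s₂ - (c + t * I)) (s₃ + s₄ + (c + t * I)) =
      2 * Real.pi * Gamma s₄ * ∑' p : ℕ × ℕ,
        mordellTornheimTerm s₁ s₂ s₃ p * ((p.1 + 1 + 2 * (p.2 + 1) : ℕ) : ℂ) ^ (-s₄) := by
  have summable_norm_mul_rpow :
      Summable fun p => ‖mordellTornheimTerm s₁ s₂ (s₃ + s₄) p‖ * sndRatio p ^ c := by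
    simpa only [← mordellTornheimTerm_mul_sndRatio_cpow, norm_mul,
      norm_cpow_eq_rpow_re_of_pos (sndRatio_pos _), ofReal_re] using h
  simp only [mordellTornheimTerm_mul_cpow_neg]
  rw [← integral_Gamma_add_mul_Gamma_neg_mul_tsum hc0 hc1 sndRatio_pos summable_norm_mul_rpow]
  simp only [mordellTornheimTerm_mul_sndRatio_cpow]
  rfl

lemma zetaSO5_eq_tsum_mordellTornheimTerm (s : ℂ) :
    zetaSO5 s = 6 ^ s * ∑' p : ℕ × ℕ,
      mordellTornheimTerm s s s p * ((p.1 + 1 + 2 * (p.2 + 1) : ℕ) : ℂ) ^ (-s) := by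
  refine congrArg (6 ^ s * ·) (tsum_congr fun p => ?_)
  rw [mordellTornheimTerm, ← natCast_mul_natCast_cpow, ← Nat.cast_mul, ← natCast_mul_natCast_cpow,
    ← Nat.cast_mul, ← natCast_mul_natCast_cpow, ← Nat.cast_mul,
    show p.1 + p.2 + 2 = p.1 + 1 + (p.2 + 1) by ring]

end MordellTornheim

theorem stmt10_general (s : ℂ) (c : ℝ) (hs : 1 / 2 < s.re) (hc0 : -s.re < c) (hc1 : c < 0) :
    zetaSO5 s =
      (6 : ℂ) ^ s / (2 * Real.pi * Complex.Gamma s) *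
        ∫ t : ℝ, Complex.Gamma (s + ((c : ℂ) + t * Complex.I)) *
          Complex.Gamma (-((c : ℂ) + t * Complex.I)) *
          zetaMT s (s - ((c : ℂ) + t * Complex.I)) (2 * s + ((c : ℂ) + t * Complex.I)) := by
  have Gamma_ne_zero : Gamma s ≠ 0 := Gamma_ne_zero_of_re_pos (by linarith)
  have pi_ne_zero : (Real.pi : ℂ) ≠ 0 := ofReal_ne_zero.2 Real.pi_ne_zero
  have summable : Summable fun p => ‖mordellTornheimTerm s (s - c) (s + s + c) p‖ :=
    summable_norm_mordellTornheimTerm (α := s.re) (β := s.re + c) (by linarith) (by linarith)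
      (by linarith) (by simpa using by linarith) (by simp [add_assoc])
  rw [two_mul s, integral_Gamma_add_mul_Gamma_neg_mul_zetaMT hc0 hc1 summable,
    zetaSO5_eq_tsum_mordellTornheimTerm]
  field_simp

theorem stmt10 (s : ℂ) (c : ℝ) (hs : 1 < s.re) (hc0 : -s.re < c) (hc1 : c < 0) :
    zetaSO5 s =
      (6 : ℂ) ^ s / (2 * Real.pi * Complex.Gamma s) *
        ∫ t : ℝ, Complex.Gamma (s + ((c : ℂ) + t * Complex.I)) *
          Complex.Gamma (-((c : ℂ) + t * Complex.I)) *
          zetaMT s (s - ((c : ℂ) + t * Complex.I)) (2 * s + ((c : ℂ) + t * Complex.I)) :=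
  stmt10_general s c (by linarith) hc0 hc1
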